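/- arXiv:1701.07519 — 7 statements merged into one kernel-verified Lean document; each statement's English description precedes it below -/
import Mathlib

section
/- Block UDL decomposition: let g = [[A, B], [−conj(B), conj(A)]] be a complex 2N×2N block matrix with A, B ∈ M_N(ℂ) satisfying A A* − B B* = 1, A* A − Bᵀ conj(B) = 1, A* B = −Bᵀ conj(A), and B Aᵀ = −A Bᵀ. Then A is invertible and g = [[1, B·conj(A)⁻¹], [0, 1]] · [[(A*)⁻¹, 0], [0, conj(A)]] · [[1, 0], [−conj(A)⁻¹·conj(B), 1]]. -/
open Matrix

open scoped ComplexOrder in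
/-- If `A Aᴴ - B Bᴴ = 1`, then `A Aᴴ` is positive definite, so `A` is invertible. -/
theorem isUnit_of_mul_conjTranspose_sub_eq_one {n : Type*} [Fintype n] [DecidableEq n]
    {A B : Matrix n n ℂ} (h : A * Aᴴ - B * Bᴴ = 1) : IsUnit A := by
  have hpos : (A * Aᴴ).PosDef := by
    rw [sub_eq_iff_eq_add.mp h]
    exact Matrix.PosDef.one.add_posSemidef (Matrix.posSemidef_self_mul_conjTranspose B)
  have hdet := (Matrix.isUnit_iff_isUnit_det _).mp hpos.isUnit
  rw [Matrix.det_mul] at hdet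
  exact (Matrix.isUnit_iff_isUnit_det A).mpr (isUnit_of_mul_isUnit_left hdet)

/-- **Block UDL decomposition of an element of SO*(2N).** If
`g = [[A, B], [−conj B, conj A]]` satisfies the four `SO*(2N)` relations, then `A` is
invertible and `g = [[1, B·conj(A)⁻¹],[0,1]] · [[(A*)⁻¹,0],[0,conj A]] · [[1,0],[−conj(A)⁻¹·conj B,1]]`.
Here `conj M = Mᴴᵀ` is the entrywise conjugate and `M* = Mᴴ`. -/
theorem soStar_UDL (N : ℕ) (A B : Matrix (Fin N) (Fin N) ℂ)
    (h1 : A * Aᴴ - B * Bᴴ = 1)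
    (h2 : Aᴴ * A - Bᵀ * Bᴴᵀ = 1)
    (h3 : Aᴴ * B = -(Bᵀ * Aᴴᵀ))
    (h4 : B * Aᵀ = -(A * Bᵀ)) :
    IsUnit A ∧
      Matrix.fromBlocks A B (-(Bᴴᵀ)) (Aᴴᵀ) =
        Matrix.fromBlocks 1 (B * (Aᴴᵀ)⁻¹) 0 1 *
          Matrix.fromBlocks (Aᴴ)⁻¹ 0 0 (Aᴴᵀ) *
          Matrix.fromBlocks 1 0 (-((Aᴴᵀ)⁻¹ * Bᴴᵀ)) 1 := by
  have hA : IsUnit A := isUnit_of_mul_conjTranspose_sub_eq_one h1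
  have hAH : IsUnit Aᴴ.det :=
    (Matrix.isUnit_iff_isUnit_det _).mp ((Matrix.isUnit_conjTranspose A).mpr hA)
  have hAc : IsUnit Aᴴᵀ.det := by rwa [Matrix.det_transpose]
  have hblock : A = (Aᴴ)⁻¹ - B * ((Aᴴᵀ)⁻¹ * Bᴴᵀ) := by
    have hmul : Aᴴ * A = Aᴴ * ((Aᴴ)⁻¹ - B * ((Aᴴᵀ)⁻¹ * Bᴴᵀ)) := by
      rw [mul_sub, Matrix.mul_nonsing_inv _ hAH, ← mul_assoc, h3, neg_mul, mul_assoc,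
        Matrix.mul_nonsing_inv_cancel_left _ _ hAc, sub_neg_eq_add]
      exact sub_eq_iff_eq_add.mp h2
    exact ((Matrix.isUnit_iff_isUnit_det _).mpr hAH).mul_left_cancel hmul
  refine ⟨hA, ?_⟩
  simp only [Matrix.fromBlocks_multiply, one_mul, mul_one, zero_mul, mul_zero, add_zero,
    zero_add, mul_neg, Matrix.nonsing_inv_mul_cancel_right _ _ hAc,
    Matrix.mul_nonsing_inv_cancel_left _ _ hAc, ← sub_eq_add_neg]
  rw [← hblock, zero_sub]
end

section
/- Let g = [[A, B], [−conj(B), conj(A)]] ∈ SO*(2N) and let ζ ∈ M_N(ℂ) be antisymmetric (ζᵀ = −ζ) with 1 − ζ*ζ positive definite. Then the matrix −conj(B)·ζ + conj(A) is invertible, and g ▷ ζ := (Aζ + B)(−conj(B)ζ + conj(A))⁻¹ is again antisymmetric with 1 − (g ▷ ζ)*(g ▷ ζ) positive definite. -/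
open Matrix ComplexOrder

namespace SOStar

variable {n : Type*}

theorem conjTranspose_conj (M : Matrix n n ℂ) : Mᴴᵀᴴ = Mᵀ := by
  ext i j
  simp

theorem transpose_conjTranspose (M : Matrix n n ℂ) : Mᵀᴴ = Mᴴᵀ := by
  ext i j
  simp

variable [Fintype n]

theorem conjTranspose_relation {A B : Matrix n n ℂ} (h : Aᴴ * B = -(Bᵀ * Aᴴᵀ)) :
    Bᴴ * A = -(Aᵀ * Bᴴᵀ) := by
  simpa [conjTranspose_mul, conjTranspose_conj, transpose_conjTranspose] using
    congrArg conjTranspose h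

variable [DecidableEq n]

theorem transpose_relation {A B : Matrix n n ℂ} (h : Aᴴ * A - Bᵀ * Bᴴᵀ = 1) :
    Aᵀ * Aᴴᵀ - Bᴴ * B = 1 := by
  simpa [transpose_sub, transpose_mul] using congrArg transpose h

/-- The numerator `C` and denominator `D` of the action satisfy `D*D - C*C = 1 - ζ*ζ`. -/
theorem denom_sub_num (A B ζ : Matrix n n ℂ)
    (h2 : Aᴴ * A - Bᵀ * Bᴴᵀ = 1) (h3 : Aᴴ * B = -(Bᵀ * Aᴴᵀ)) :
    (-(Bᴴᵀ) * ζ + Aᴴᵀ)ᴴ * (-(Bᴴᵀ) * ζ + Aᴴᵀ) - (A * ζ + B)ᴴ * (A * ζ + B) = 1 - ζᴴ * ζ := by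
  have h2c := transpose_relation h2
  have h3c := conjTranspose_relation h3
  calc
    _ = (Aᵀ * Aᴴᵀ - Bᴴ * B) - ζᴴ * (Aᴴ * A - Bᵀ * Bᴴᵀ) * ζ
        - ζᴴ * (Bᵀ * Aᴴᵀ + Aᴴ * B) - (Aᵀ * Bᴴᵀ + Bᴴ * A) * ζ := by
      simp only [conjTranspose_add, conjTranspose_mul, conjTranspose_neg, conjTranspose_conj]
      noncomm_ring
    _ = 1 - ζᴴ * ζ := by
      rw [h2, h2c, h3, h3c]
      simp

/-- The numerator `C` and denominator `D` of the action satisfy `CᵀD = -DᵀC`. -/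
theorem transpose_num_mul_denom (A B ζ : Matrix n n ℂ)
    (h2 : Aᴴ * A - Bᵀ * Bᴴᵀ = 1) (h3 : Aᴴ * B = -(Bᵀ * Aᴴᵀ)) (hζ : ζᵀ = -ζ) :
    (A * ζ + B)ᵀ * (-(Bᴴᵀ) * ζ + Aᴴᵀ) = -((-(Bᴴᵀ) * ζ + Aᴴᵀ)ᵀ * (A * ζ + B)) := by
  have h2c := transpose_relation h2
  have h3c := conjTranspose_relation h3
  rw [← sub_eq_zero]
  calc
    _ = ζ * (Aᵀ * Bᴴᵀ + Bᴴ * A) * ζ - ζ * (Aᵀ * Aᴴᵀ - Bᴴ * B)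
        + (Aᴴ * A - Bᵀ * Bᴴᵀ) * ζ + (Bᵀ * Aᴴᵀ + Aᴴ * B) := by
      simp only [transpose_add, transpose_mul, transpose_neg, transpose_transpose, hζ]
      noncomm_ring
    _ = 0 := by
      rw [h2, h2c, h3, h3c]
      simp

/-- If `D*D - C*C` is positive definite, then `D` is invertible. -/
theorem isUnit_of_posDef_sub {C D : Matrix n n ℂ} (h : (Dᴴ * D - Cᴴ * C).PosDef) :
    IsUnit D := by
  have hD : (Dᴴ * D).PosDef := by
    simpa using h.add_posSemidef (posSemidef_conjTranspose_mul_self C)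
  exact isUnit_of_mul_isUnit_right hD.isUnit

/-- If `D*D - C*C` is positive definite, then so is `1 - (CD⁻¹)*(CD⁻¹)`. -/
theorem posDef_one_sub_mul_inv {C D : Matrix n n ℂ} (h : (Dᴴ * D - Cᴴ * C).PosDef) :
    (1 - (C * D⁻¹)ᴴ * (C * D⁻¹)).PosDef := by
  have hD := isUnit_of_posDef_sub h
  have hinv : D * D⁻¹ = 1 := mul_nonsing_inv D ((isUnit_iff_isUnit_det D).1 hD)
  have key := h.conjTranspose_mul_mul_same (B := D⁻¹)
    (mulVec_injective_of_isUnit (isUnit_nonsing_inv_iff.2 hD))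
  convert key using 1
  calc
    _ = (D * D⁻¹)ᴴ * (D * D⁻¹) - (C * D⁻¹)ᴴ * (C * D⁻¹) := by simp [hinv]
    _ = _ := by
      simp only [conjTranspose_mul]
      noncomm_ring

/-- If `D` is invertible and `CᵀD = -DᵀC`, then `CD⁻¹` is antisymmetric. -/
theorem transpose_mul_inv_eq_neg {C D : Matrix n n ℂ} (hD : IsUnit D)
    (h : Cᵀ * D = -(Dᵀ * C)) : (C * D⁻¹)ᵀ = -(C * D⁻¹) := by
  have hinv : D * D⁻¹ = 1 := mul_nonsing_inv D ((isUnit_iff_isUnit_det D).1 hD)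
  have hinvT : D⁻¹ᵀ * Dᵀ = 1 := by rw [← transpose_mul, hinv, transpose_one]
  calc
    (C * D⁻¹)ᵀ = D⁻¹ᵀ * (Cᵀ * D) * D⁻¹ := by
      rw [transpose_mul, mul_assoc, mul_assoc, hinv, mul_one]
    _ = -(D⁻¹ᵀ * Dᵀ * (C * D⁻¹)) := by
      rw [h]
      noncomm_ring
    _ = -(C * D⁻¹) := by rw [hinvT, one_mul]

end SOStar

/-- **The Möbius action of SO*(2N) preserves the bounded domain Ω_N.**
Let `g = [[A, B], [−conj B, conj A]] ∈ SO*(2N)` and `ζ` antisymmetric with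
`1 − ζ*ζ` positive definite. Then `−conj(B)·ζ + conj(A)` is invertible, and
`g ▷ ζ = (Aζ + B)(−conj(B)ζ + conj(A))⁻¹` is antisymmetric with
`1 − (g ▷ ζ)*(g ▷ ζ)` positive definite. -/
theorem soStar_action_preserves_domain (N : ℕ) (A B ζ : Matrix (Fin N) (Fin N) ℂ)
    (h1 : A * Aᴴ - B * Bᴴ = 1)
    (h2 : Aᴴ * A - Bᵀ * Bᴴᵀ = 1)
    (h3 : Aᴴ * B = -(Bᵀ * Aᴴᵀ))
    (h4 : B * Aᵀ = -(A * Bᵀ))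
    (hζ : ζᵀ = -ζ) (hpd : (1 - ζᴴ * ζ).PosDef) :
    IsUnit (-(Bᴴᵀ) * ζ + Aᴴᵀ) ∧
    ((A * ζ + B) * (-(Bᴴᵀ) * ζ + Aᴴᵀ)⁻¹)ᵀ =
      -((A * ζ + B) * (-(Bᴴᵀ) * ζ + Aᴴᵀ)⁻¹) ∧
    (1 - ((A * ζ + B) * (-(Bᴴᵀ) * ζ + Aᴴᵀ)⁻¹)ᴴ *
        ((A * ζ + B) * (-(Bᴴᵀ) * ζ + Aᴴᵀ)⁻¹)).PosDef := by
  have hsub := SOStar.denom_sub_num A B ζ h2 h3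
  rw [← hsub] at hpd
  have hD := SOStar.isUnit_of_posDef_sub hpd
  exact ⟨hD,
    SOStar.transpose_mul_inv_eq_neg hD (SOStar.transpose_num_mul_denom A B ζ h2 h3 hζ),
    SOStar.posDef_one_sub_mul_inv hpd⟩
end

section
/- Let ω, ζ ∈ Ω_N, and for η ∈ Ω_N set X_η := ((1 − ηη*)⁻¹)^{1/2} and g_η := [[X_η, η·conj(X_η)], [η*·X_η, conj(X_η)]]. Then g_ω⁻¹ g_ζ = [[X_ω(1 − ωζ*)X_ζ, X_ω(ζ − ω)conj(X_ζ)], [conj(X_ω)(ζ* − ω*)X_ζ, conj(X_ω)(1 − ω*ζ)conj(X_ζ)]]; in particular the matrix 1 − ω*ζ is invertible, so det(1 − ω*ζ) ≠ 0. -/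
open Matrix ComplexOrder

/-- A matrix whose Hermitian part is positive definite is invertible. -/
theorem Matrix.isUnit_of_posDef_add_conjTranspose {n : Type*} [Fintype n] [DecidableEq n]
    {M : Matrix n n ℂ} (h : (M + Mᴴ).PosDef) : IsUnit M := by
  rw [← Matrix.mulVec_injective_iff_isUnit]
  refine (injective_iff_map_eq_zero M.mulVecLin).2 fun v hv => ?_
  rw [Matrix.mulVecLin_apply] at hv
  by_contra hne
  have hpos := h.dotProduct_mulVec_pos hne
  rw [Matrix.add_mulVec, hv, zero_add, Matrix.dotProduct_mulVec, ← Matrix.star_mulVec, hv,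
    star_zero, zero_dotProduct] at hpos
  exact lt_irrefl _ hpos

/-- If `1 - ω*ω` and `1 - ζ*ζ` are positive definite, then `1 - ω*ζ` is invertible. -/
theorem Matrix.isUnit_one_sub_conjTranspose_mul {n : Type*} [Fintype n] [DecidableEq n]
    {ω ζ : Matrix n n ℂ} (hω : (1 - ωᴴ * ω).PosDef) (hζ : (1 - ζᴴ * ζ).PosDef) :
    IsUnit (1 - ωᴴ * ζ) := by
  apply Matrix.isUnit_of_posDef_add_conjTranspose
  have key : (1 - ωᴴ * ζ) + (1 - ωᴴ * ζ)ᴴ =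
      (1 - ωᴴ * ω) + (1 - ζᴴ * ζ) + (ω - ζ)ᴴ * (ω - ζ) := by
    simp only [conjTranspose_sub, conjTranspose_one, conjTranspose_mul,
      conjTranspose_conjTranspose]
    noncomm_ring
  rw [key]
  exact (hω.add hζ).add_posSemidef (posSemidef_conjTranspose_mul_self _)

/-- If `X * X = A⁻¹` with `X` invertible, then `X * A * X = 1`. -/
theorem Matrix.mul_mul_self_eq_one_of_sq_eq_inv {n R : Type*} [Fintype n] [DecidableEq n]
    [CommRing R] {X A : Matrix n n R} (hX : IsUnit X) (h : X * X = A⁻¹) : X * A * X = 1 := by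
  have hA : IsUnit A := by
    rw [← Matrix.isUnit_nonsing_inv_iff, ← h]
    exact hX.mul hX
  have hXA : X * (X * A) = 1 := by
    rw [← mul_assoc, h, Matrix.nonsing_inv_mul _ ((Matrix.isUnit_iff_isUnit_det A).1 hA)]
  exact mul_eq_one_comm.1 hXA

/-- The inverse of the block matrix `g_ω`. -/
theorem Matrix.inv_fromBlocks_of_antisymmetric {n : Type*} [Fintype n] [DecidableEq n]
    {ω X : Matrix n n ℂ} (hω : ωᵀ = -ω) (hX : X.PosDef) (hX2 : X * X = (1 - ω * ωᴴ)⁻¹) :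
    (fromBlocks X (ω * Xᴴᵀ) (ωᴴ * X) Xᴴᵀ)⁻¹ =
      fromBlocks X (-(X * ω)) (-(Xᴴᵀ * ωᴴ)) Xᴴᵀ := by
  have hXX : X * (1 - ω * ωᴴ) * X = 1 := mul_mul_self_eq_one_of_sq_eq_inv hX.isUnit hX2
  have hYY : Xᴴᵀ * (1 - ωᴴ * ω) * Xᴴᵀ = 1 := by
    have hT : (ω * ωᴴ)ᵀ = ωᴴ * ω := by
      have hωH : ωᴴᵀ = -ωᴴ := by
        rw [← conjTranspose_transpose_eq_transpose_conjTranspose, hω, conjTranspose_neg]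
      rw [transpose_mul, hω, hωH, neg_mul_neg]
    have := congrArg transpose hXX
    rw [transpose_mul, transpose_mul, transpose_sub, transpose_one, hT, ← mul_assoc] at this
    rwa [hX.isHermitian.eq]
  apply Matrix.inv_eq_left_inv
  rw [fromBlocks_multiply, ← fromBlocks_one]
  congr 1
  · rw [← hXX]; noncomm_ring
  · noncomm_ring
  · noncomm_ring
  · rw [← hYY]; noncomm_ring

/-- **Block form of `g_ω⁻¹ g_ζ`.** For `ω, ζ ∈ Ω_N` with positive-definite square roots
`X_ω, X_ζ` of `(1 − ωω*)⁻¹, (1 − ζζ*)⁻¹` and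
`g_η = [[X_η, η·conj X_η], [η*·X_η, conj X_η]]`, we have
`g_ω⁻¹ g_ζ = [[X_ω(1 − ωζ*)X_ζ, X_ω(ζ − ω)conj X_ζ],
[conj X_ω (ζ* − ω*) X_ζ, conj X_ω (1 − ω*ζ) conj X_ζ]]`; in particular `1 − ω*ζ` is
invertible and `det(1 − ω*ζ) ≠ 0`. -/
theorem soStar_gInv_mul_g (N : ℕ) (ω ζ Xω Xζ : Matrix (Fin N) (Fin N) ℂ)
    (hω : ωᵀ = -ω) (hpdω : (1 - ωᴴ * ω).PosDef)
    (hζ : ζᵀ = -ζ) (hpdζ : (1 - ζᴴ * ζ).PosDef)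
    (hXω : Xω.PosDef) (hXω2 : Xω * Xω = (1 - ω * ωᴴ)⁻¹)
    (hXζ : Xζ.PosDef) (hXζ2 : Xζ * Xζ = (1 - ζ * ζᴴ)⁻¹) :
    (Matrix.fromBlocks Xω (ω * Xωᴴᵀ) (ωᴴ * Xω) (Xωᴴᵀ))⁻¹ *
        Matrix.fromBlocks Xζ (ζ * Xζᴴᵀ) (ζᴴ * Xζ) (Xζᴴᵀ) =
      Matrix.fromBlocks (Xω * (1 - ω * ζᴴ) * Xζ) (Xω * (ζ - ω) * Xζᴴᵀ)
        (Xωᴴᵀ * (ζᴴ - ωᴴ) * Xζ) (Xωᴴᵀ * (1 - ωᴴ * ζ) * Xζᴴᵀ) ∧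
    IsUnit (1 - ωᴴ * ζ) ∧ (1 - ωᴴ * ζ).det ≠ 0 := by
  have hunit := Matrix.isUnit_one_sub_conjTranspose_mul hpdω hpdζ
  refine ⟨?_, hunit, ((Matrix.isUnit_iff_isUnit_det _).1 hunit).ne_zero⟩
  rw [Matrix.inv_fromBlocks_of_antisymmetric hω hXω hXω2, fromBlocks_multiply]
  congr 1 <;> noncomm_ring
end

section
/- Let ω, ζ ∈ Ω_N. Then det(1 − ζ*ζ) and det(1 − ω*ω) are positive real numbers, det(1 − ω*ζ) ≠ 0, and det( sqrt(1 − ζζ*) · (1 − ζω*)⁻¹ · sqrt(1 − ωω*) ) = det(1 − ζ*ζ)^{1/2} · det(1 − ω*ω)^{1/2} / det(1 − ω*ζ), where sqrt denotes the unique positive-definite square root and the real square roots on the right are the positive ones. -/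
open Matrix ComplexOrder

/-- A square matrix with positive definite Hermitian part is nonsingular. -/
theorem Matrix.det_ne_zero_of_posDef_add_conjTranspose {n : Type*} [Fintype n] [DecidableEq n]
    {A : Matrix n n ℂ} (hA : (A + Aᴴ).PosDef) : A.det ≠ 0 := by
  intro h
  obtain ⟨v, hv, hAv⟩ := Matrix.exists_mulVec_eq_zero_iff.mpr h
  have hpos := hA.dotProduct_mulVec_pos hv
  rw [add_mulVec, hAv, zero_add, dotProduct_mulVec, ← star_mulVec, hAv] at hpos
  simp at hpos

theorem det_one_sub_conjTranspose_mul_ne_zero {n : Type*} [Fintype n] [DecidableEq n]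
    {ω ζ : Matrix n n ℂ} (hω : (1 - ωᴴ * ω).PosDef) (hζ : (1 - ζᴴ * ζ).PosDef) :
    (1 - ωᴴ * ζ).det ≠ 0 := by
  apply Matrix.det_ne_zero_of_posDef_add_conjTranspose
  have key : (1 - ωᴴ * ζ) + (1 - ωᴴ * ζ)ᴴ =
      (1 - ωᴴ * ω) + (1 - ζᴴ * ζ) + (ω - ζ)ᴴ * (ω - ζ) := by
    simp only [conjTranspose_sub, conjTranspose_mul, conjTranspose_conjTranspose,
      conjTranspose_one]
    noncomm_ring
  rw [key]
  exact (hω.add hζ).add_posSemidef (posSemidef_conjTranspose_mul_self _)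

theorem Matrix.PosDef.exists_det_eq_ofReal {n : Type*} [Fintype n] [DecidableEq n]
    {A : Matrix n n ℂ} (hA : A.PosDef) : ∃ x : ℝ, 0 < x ∧ A.det = (x : ℂ) := by
  obtain ⟨x, hx, hxA⟩ := RCLike.pos_iff_exists_ofReal.mp hA.det_pos
  exact ⟨x, hx, hxA.symm⟩

theorem Matrix.PosDef.exists_det_eq_sq {n : Type*} [Fintype n] [DecidableEq n]
    {A : Matrix n n ℂ} (hA : A.PosDef) : ∃ r : ℝ, 0 < r ∧ A.det = ((r ^ 2 : ℝ) : ℂ) := by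
  obtain ⟨x, hx, hxA⟩ := hA.exists_det_eq_ofReal
  exact ⟨√x, Real.sqrt_pos.mpr hx, by rw [Real.sq_sqrt hx.le, hxA]⟩

theorem Matrix.PosDef.det_eq_of_det_mul_self {n : Type*} [Fintype n] [DecidableEq n]
    {S : Matrix n n ℂ} (hS : S.PosDef) {r : ℝ} (hr : 0 < r)
    (h : (S * S).det = ((r ^ 2 : ℝ) : ℂ)) : S.det = (r : ℂ) := by
  obtain ⟨x, hx, hxS⟩ := hS.exists_det_eq_ofReal
  rw [det_mul, hxS, ← sq] at h
  rw [hxS]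
  norm_cast at h ⊢
  exact (pow_left_inj₀ hx.le hr.le two_ne_zero).mp h

/-- **Coherent state overlap formula.** For `ω, ζ ∈ Ω_N`, the determinants
`det(1 − ζ*ζ)` and `det(1 − ω*ω)` are positive reals (say `r²` and `s²` with `r, s > 0`
their positive square roots), `det(1 − ω*ζ) ≠ 0`, and for the unique positive-definite
square roots `S_ζ = sqrt(1 − ζζ*)`, `S_ω = sqrt(1 − ωω*)` one has
`det(S_ζ (1 − ζω*)⁻¹ S_ω) = r·s / det(1 − ω*ζ)`. -/
theorem soStar_overlap (N : ℕ) (ω ζ : Matrix (Fin N) (Fin N) ℂ)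
    (hω : ωᵀ = -ω) (hpdω : (1 - ωᴴ * ω).PosDef)
    (hζ : ζᵀ = -ζ) (hpdζ : (1 - ζᴴ * ζ).PosDef) :
    ∃ r s : ℝ, 0 < r ∧ 0 < s ∧
      (1 - ζᴴ * ζ).det = ((r ^ 2 : ℝ) : ℂ) ∧
      (1 - ωᴴ * ω).det = ((s ^ 2 : ℝ) : ℂ) ∧
      (1 - ωᴴ * ζ).det ≠ 0 ∧
      ∀ Sζ Sω : Matrix (Fin N) (Fin N) ℂ,
        Sζ.PosDef → Sζ * Sζ = 1 - ζ * ζᴴ →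
        Sω.PosDef → Sω * Sω = 1 - ω * ωᴴ →
        (Sζ * (1 - ζ * ωᴴ)⁻¹ * Sω).det = ((r * s : ℝ) : ℂ) / (1 - ωᴴ * ζ).det := by
  obtain ⟨r, hr, hrdet⟩ := hpdζ.exists_det_eq_sq
  obtain ⟨s, hs, hsdet⟩ := hpdω.exists_det_eq_sq
  refine ⟨r, s, hr, hs, hrdet, hsdet, det_one_sub_conjTranspose_mul_ne_zero hpdω hpdζ, ?_⟩
  intro Sζ Sω hSζ hSζsq hSω hSωsq
  have hdetζ : Sζ.det = (r : ℂ) :=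
    hSζ.det_eq_of_det_mul_self hr (by rw [hSζsq, det_one_sub_mul_comm, hrdet])
  have hdetω : Sω.det = (s : ℂ) :=
    hSω.det_eq_of_det_mul_self hs (by rw [hSωsq, det_one_sub_mul_comm, hsdet])
  rw [det_mul, det_mul, det_nonsing_inv, Ring.inverse_eq_inv', hdetζ, hdetω,
    det_one_sub_mul_comm ζ ωᴴ, Complex.ofReal_mul]
  ring
end

section
/- Probability distribution of the total area: let ζ ∈ M_N(ℂ) be antisymmetric of rank 2 with 1 − ζ*ζ positive definite, and set x := (1/2) tr(ζ*ζ), a real number with 0 ≤ x < 1. Then det(1 − ζ*ζ) = (1 − x)², the numbers P_ζ(J) := det(1 − ζ*ζ) · x^J · (J+1) for J ∈ ℕ satisfy Σ_{J=0}^{∞} P_ζ(J) = 1, and the mean of this distribution equals the expected total area: Σ_{J=0}^{∞} J · P_ζ(J) = tr[ζ*ζ (1 − ζ*ζ)⁻¹] = 2x/(1−x). -/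
open Matrix ComplexOrder

/-- A matrix over a field of rank `r` factors through `r` dimensions, the left factor having a
left inverse. -/
theorem Matrix.exists_rank_factorization {K m n : Type*} [Field K] [Fintype m] [DecidableEq m]
    [Fintype n] [DecidableEq n] {r : ℕ} (M : Matrix m n K) (hM : M.rank = r) :
    ∃ (A : Matrix m (Fin r) K) (B : Matrix (Fin r) n K) (L : Matrix (Fin r) m K),
      L * A = 1 ∧ M = A * B := by
  let f := Matrix.toLin' M
  let e : LinearMap.range f ≃ₗ[K] (Fin r → K) :=
    LinearEquiv.ofFinrankEq _ _ (by rw [Module.finrank_fin_fun, ← hM]; rfl)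
  let i : (Fin r → K) →ₗ[K] (m → K) := (LinearMap.range f).subtype ∘ₗ e.symm.toLinearMap
  let p : (n → K) →ₗ[K] (Fin r → K) := e.toLinearMap ∘ₗ f.rangeRestrict
  obtain ⟨g, hg⟩ := i.exists_leftInverse_of_injective
    (LinearMap.ker_eq_bot.2 (Subtype.val_injective.comp e.symm.injective))
  refine ⟨LinearMap.toMatrix' i, LinearMap.toMatrix' p, LinearMap.toMatrix' g, ?_, ?_⟩
  · rw [← LinearMap.toMatrix'_comp, hg, LinearMap.toMatrix'_id]
  · have hip : i ∘ₗ p = f := by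
      ext
      simp [i, p]
    rw [← LinearMap.toMatrix'_comp, hip, LinearMap.toMatrix'_toLin']

/-- An antisymmetric matrix of rank `r` is congruent to an antisymmetric `r × r` matrix. -/
theorem Matrix.exists_eq_mul_mul_transpose_of_transpose_eq_neg {K n : Type*} [Field K] [Fintype n]
    [DecidableEq n] {r : ℕ} {M : Matrix n n K} (hM : Mᵀ = -M) (hr : M.rank = r) :
    ∃ (A : Matrix n (Fin r) K) (S : Matrix (Fin r) (Fin r) K), Sᵀ = -S ∧ M = A * S * Aᵀ := by
  obtain ⟨A, B, L, hLA, hAB⟩ := M.exists_rank_factorization hr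
  have hAL : Aᵀ * Lᵀ = 1 := by rw [← transpose_mul, hLA, transpose_one]
  have hLM : L * M = B := by rw [hAB, ← Matrix.mul_assoc, hLA, Matrix.one_mul]
  have hML : M * Lᵀ = -Bᵀ := by rw [← hLM, transpose_mul, hM, Matrix.neg_mul, neg_neg]
  have hB : B = L * M * Lᵀ * Aᵀ := by
    rw [Matrix.mul_assoc L, hML, Matrix.mul_neg, Matrix.neg_mul, Matrix.mul_assoc,
      ← transpose_mul, ← hAB, hM, Matrix.mul_neg, neg_neg, hLM]
  refine ⟨A, L * M * Lᵀ, ?_, ?_⟩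
  · simp [transpose_mul, hM, Matrix.mul_assoc]
  · rw [Matrix.mul_assoc, ← hB, hAB]

/-- For an antisymmetric `2 × 2` matrix `S`, the matrix `Sᴴ * G * S * Gᵀ` is
scalar. -/
theorem Matrix.conjTranspose_mul_mul_mul_transpose_eq_smul_one {S : Matrix (Fin 2) (Fin 2) ℂ}
    (hS : Sᵀ = -S) (G : Matrix (Fin 2) (Fin 2) ℂ) :
    Sᴴ * G * S * Gᵀ = (star (S 0 1) * S 0 1 * G.det) • (1 : Matrix (Fin 2) (Fin 2) ℂ) := by
  have h00 : S 0 0 = 0 := self_eq_neg.1 (congrFun₂ hS 0 0)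
  have h11 : S 1 1 = 0 := self_eq_neg.1 (congrFun₂ hS 1 1)
  have h10 : S 1 0 = -S 0 1 := congrFun₂ hS 0 1
  ext i j
  fin_cases i <;> fin_cases j <;>
    simp [Matrix.mul_apply, Fin.sum_univ_two, det_fin_two, h00, h11, h10] <;> ring

/-- For an antisymmetric `ζ` of rank 2, `ζᴴ * ζ` is a product `X * Y` with `Y * X` a scalar
`2 × 2` matrix. -/
theorem Matrix.exists_conjTranspose_mul_self_eq_mul {n : Type*} [Fintype n] [DecidableEq n]
    {ζ : Matrix n n ℂ} (hζ : ζᵀ = -ζ) (hr : ζ.rank = 2) :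
    ∃ (X : Matrix n (Fin 2) ℂ) (Y : Matrix (Fin 2) n ℂ) (c : ℂ),
      ζᴴ * ζ = X * Y ∧ Y * X = c • (1 : Matrix (Fin 2) (Fin 2) ℂ) := by
  obtain ⟨A, S, hS, rfl⟩ := exists_eq_mul_mul_transpose_of_transpose_eq_neg hζ hr
  refine ⟨Aᵀᴴ, Sᴴ * (Aᴴ * A) * S * Aᵀ, star (S 0 1) * S 0 1 * (Aᴴ * A).det, ?_, ?_⟩
  · simp only [conjTranspose_mul, Matrix.mul_assoc]
  · rw [← conjTranspose_mul_mul_mul_transpose_eq_smul_one hS, Matrix.mul_assoc _ Aᵀ,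
      transpose_mul]
    rfl

theorem hasSum_one_sub_sq_mul_pow_mul_succ {x : ℝ} (hx : ‖x‖ < 1) :
    HasSum (fun J : ℕ ↦ (1 - x) ^ 2 * x ^ J * (J + 1)) 1 := by
  have hne : 1 - x ≠ 0 := sub_ne_zero.2 fun h ↦ by simp [← h] at hx
  convert! (hasSum_choose_mul_geometric_of_norm_lt_one 1 hx).mul_left ((1 - x) ^ 2) using 1
  · ext J
    simp only [Nat.choose_one_right]
    push_cast
    ring
  · field_simp

theorem hasSum_mul_one_sub_sq_mul_pow_mul_succ {x : ℝ} (hx : ‖x‖ < 1) :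
    HasSum (fun J : ℕ ↦ (J : ℝ) * ((1 - x) ^ 2 * x ^ J * (J + 1))) (2 * x / (1 - x)) := by
  have hne : 1 - x ≠ 0 := sub_ne_zero.2 fun h ↦ by simp [← h] at hx
  convert! ((hasSum_choose_mul_geometric_of_norm_lt_one 2 hx).mul_left (2 * (1 - x) ^ 2)).sub
    ((hasSum_one_sub_sq_mul_pow_mul_succ hx).mul_left 2) using 1
  · ext J
    rw [Nat.cast_choose_two]
    push_cast
    ring
  · field_simp
    ring

/-- **Probability distribution of the total area.** Let `ζ ∈ M_N(ℂ)` be antisymmetric of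
rank 2 with `1 − ζ*ζ` positive definite, and let `x = (1/2) tr(ζ*ζ)`; then `x` is a real
number with `0 ≤ x < 1`, `det(1 − ζ*ζ) = (1 − x)²`, the numbers
`P_ζ(J) = det(1 − ζ*ζ)·x^J·(J+1)` sum to 1 over `J ∈ ℕ`, and the mean
`Σ_J J·P_ζ(J)` equals the expected total area `tr[ζ*ζ(1 − ζ*ζ)⁻¹] = 2x/(1−x)`. -/
theorem total_area_distribution (N : ℕ) (ζ : Matrix (Fin N) (Fin N) ℂ)
    (hζ : ζᵀ = -ζ) (hrank : ζ.rank = 2) (hpd : (1 - ζᴴ * ζ).PosDef) :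
    ∃ x : ℝ, 0 ≤ x ∧ x < 1 ∧
      (1 / 2 : ℂ) * (ζᴴ * ζ).trace = (x : ℂ) ∧
      (1 - ζᴴ * ζ).det = (((1 - x) ^ 2 : ℝ) : ℂ) ∧
      (∑' J : ℕ, (1 - x) ^ 2 * x ^ J * (J + 1)) = 1 ∧
      (∑' J : ℕ, (J : ℝ) * ((1 - x) ^ 2 * x ^ J * (J + 1))) = 2 * x / (1 - x) ∧
      (ζᴴ * ζ * (1 - ζᴴ * ζ)⁻¹).trace = ((2 * x / (1 - x) : ℝ) : ℂ) := by
  obtain ⟨X, Y, c, hXY, hYX⟩ := exists_conjTranspose_mul_self_eq_mul hζ hrank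
  have htr : (ζᴴ * ζ).trace = 2 * c := by
    rw [hXY, trace_mul_comm, hYX]
    simp [mul_comm]
  have hdet : (1 - ζᴴ * ζ).det = (1 - c) ^ 2 := by
    rw [hXY, det_one_sub_mul_comm, hYX]
    simp [det_fin_two, sq]
  have hmul : ζᴴ * ζ * (1 - ζᴴ * ζ) = (1 - c) • (ζᴴ * ζ) := by
    rw [Matrix.mul_sub, Matrix.mul_one, sub_smul, one_smul, hXY, Matrix.mul_assoc X,
      ← Matrix.mul_assoc Y, hYX, Matrix.smul_mul, Matrix.one_mul, Matrix.mul_smul]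
  have hnonneg := (posSemidef_conjTranspose_mul_self ζ).trace_nonneg
  obtain ⟨x, rfl⟩ : ∃ x : ℝ, c = x := by
    refine ⟨c.re, Complex.ext rfl ?_⟩
    simpa [htr] using (Complex.nonneg_iff.1 hnonneg).2.symm
  have hx0 : 0 ≤ x := by
    rw [htr] at hnonneg
    have : (0 : ℝ) ≤ 2 * x := by exact_mod_cast hnonneg
    linarith
  have hne : 1 - x ≠ 0 := by
    intro h
    have hc : (1 - x : ℂ) = 0 := by exact_mod_cast h
    exact hpd.det_pos.ne' (by rw [hdet, hc]; simp)
  have hx1 : x < 1 := by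
    have h := (hpd.posSemidef.mul_mul_conjTranspose_same ζ).trace_nonneg
    rw [trace_mul_comm, ← Matrix.mul_assoc, hmul, trace_smul, htr, smul_eq_mul] at h
    have h' : 0 ≤ (1 - x) * (2 * x) := by exact_mod_cast h
    by_contra! hle
    have : 1 < x := lt_of_le_of_ne hle fun h ↦ hne (by simp [← h])
    nlinarith
  have hnorm : ‖x‖ < 1 := by rwa [Real.norm_of_nonneg hx0]
  refine ⟨x, hx0, hx1, ?_, ?_, (hasSum_one_sub_sq_mul_pow_mul_succ hnorm).tsum_eq,
    (hasSum_mul_one_sub_sq_mul_pow_mul_succ hnorm).tsum_eq, ?_⟩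
  · rw [htr]
    ring
  · rw [hdet]
    push_cast
    rfl
  · have hinv := congrArg (fun M ↦ (M * (1 - ζᴴ * ζ)⁻¹).trace) hmul
    simp only [Matrix.smul_mul, trace_smul, smul_eq_mul] at hinv
    rw [Matrix.mul_nonsing_inv_cancel_right _ _ hpd.det_pos.ne'.isUnit, htr] at hinv
    have hc : (1 - x : ℂ) ≠ 0 := by exact_mod_cast hne
    push_cast
    rw [eq_div_iff hc, hinv, mul_comm]
end

section
/- Symmetries of the decomposition: let M = ⊕_{i=1}^{ℓ} Λ_i Ω_{μ_i} ⊕ 0_{N−2k} ∈ M_N(ℂ), where Λ_1 > Λ_2 > … > Λ_ℓ > 0 are distinct positive reals, μ_1, …, μ_ℓ are positive integers with Σ_i μ_i = k, Ω_μ := ⊕_{j=1}^{μ} σ with σ = [[0,−1],[1,0]], and 2k ≤ N. Then a unitary matrix W ∈ U(N) satisfies W M Wᵀ = M if and only if W is block diagonal, W = diag(W_1, …, W_ℓ, D), where each W_i is a 2μ_i × 2μ_i unitary matrix satisfying W_i Ω_{μ_i} W_iᵀ = Ω_{μ_i} (i.e., W_i lies in the compact symplectic group Sp(2μ_i) = Sp(2μ_i,ℂ)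 ∩ U(2μ_i)) and D ∈ U(N−2k) is unitary. -/
open Matrix

/-- `Ω_μ = ⊕_{j=1}^{μ} σ` with `σ = [[0, −1], [1, 0]]`, as a `2μ × 2μ` matrix:
entry `(2j+1, 2j) = 1`, entry `(2j, 2j+1) = −1`, all others `0`. -/
noncomputable def OmegaMat (μ : ℕ) : Matrix (Fin (2 * μ)) (Fin (2 * μ)) ℂ :=
  fun x y =>
    if (x : ℕ) = (y : ℕ) + 1 ∧ (y : ℕ) % 2 = 0 then 1
    else if (y : ℕ) = (x : ℕ) + 1 ∧ (x : ℕ) % 2 = 0 then -1 else 0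

/-- `M = ⊕_{i=1}^{ℓ} Λ_i Ω_{μ_i} ⊕ 0_{N−2k}`, realized over the index type
`(Σ i : Fin ℓ, Fin (2μ_i)) ⊕ Fin m` (so `N = 2k + m` with `k = Σ μ_i`). -/
noncomputable def bigM (ℓ m : ℕ) (μ : Fin ℓ → ℕ) (Λ : Fin ℓ → ℝ) :
    Matrix ((Σ i : Fin ℓ, Fin (2 * μ i)) ⊕ Fin m)
      ((Σ i : Fin ℓ, Fin (2 * μ i)) ⊕ Fin m) ℂ :=
  Matrix.fromBlocks
    (Matrix.blockDiagonal' fun i => (Λ i : ℂ) • OmegaMat (μ i)) 0 0 0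

/-- `Ω_μ` is unitary. -/
theorem OmegaMat_mul_conjTranspose (μ : ℕ) : OmegaMat μ * (OmegaMat μ)ᴴ = 1 := by
  ext x y
  obtain ⟨p, hp⟩ : ∃ p : Fin (2 * μ),
      ((x : ℕ) % 2 = 0 ∧ (p : ℕ) = x + 1) ∨ ((x : ℕ) % 2 = 1 ∧ (p : ℕ) + 1 = x) := by
    rcases Nat.mod_two_eq_zero_or_one x with h | h
    · exact ⟨⟨x + 1, by omega⟩, Or.inl ⟨h, rfl⟩⟩
    · exact ⟨⟨x - 1, by omega⟩, Or.inr ⟨h, by simp only; omega⟩⟩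
  rw [Matrix.mul_apply, Finset.sum_eq_single p]
  · by_cases hxy : x = y
    · subst hxy
      rw [Matrix.one_apply_eq, Matrix.conjTranspose_apply, OmegaMat]
      rcases hp with ⟨h, h'⟩ | ⟨h, h'⟩
      · rw [if_neg (by omega), if_pos (by omega)]
        simp
      · rw [if_pos (by omega)]
        simp
    · have hne : (x : ℕ) ≠ y := fun h => hxy (Fin.ext h)
      have h0 : OmegaMat μ y p = 0 := by
        rw [OmegaMat, if_neg (by omega), if_neg (by omega)]
      rw [Matrix.one_apply_ne hxy, Matrix.conjTranspose_apply, h0]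
      simp
  · intro z _ hz
    have hne : (z : ℕ) ≠ p := fun h => hz (Fin.ext h)
    have h0 : OmegaMat μ x z = 0 := by
      rw [OmegaMat, if_neg (by omega), if_neg (by omega)]
    rw [h0, zero_mul]
  · simp

/-- `M Mᴴ` is the diagonal matrix of squared weights. -/
theorem bigM_mul_conjTranspose (ℓ m : ℕ) (μ : Fin ℓ → ℕ) (Λ : Fin ℓ → ℝ) :
    bigM ℓ m μ Λ * (bigM ℓ m μ Λ)ᴴ =
      diagonal (Sum.elim (fun x => (Λ x.1 : ℂ) ^ 2) 0) := by
  have hblock : ∀ i, ((Λ i : ℂ) • OmegaMat (μ i)) * ((Λ i : ℂ) • OmegaMat (μ i))ᴴ =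
      diagonal fun _ => (Λ i : ℂ) ^ 2 := by
    intro i
    rw [conjTranspose_smul, smul_mul_smul_comm, OmegaMat_mul_conjTranspose,
      smul_one_eq_diagonal]
    simp [sq]
  rw [bigM, fromBlocks_conjTranspose, fromBlocks_multiply, blockDiagonal'_conjTranspose]
  simp only [conjTranspose_zero, Matrix.mul_zero, Matrix.zero_mul, add_zero]
  rw [← blockDiagonal'_mul]
  simp only [hblock]
  rw [blockDiagonal'_diagonal, ← diagonal_zero, fromBlocks_diagonal]
  rfl

/-- A unitary congruence `W M Wᵀ = M` makes `W` commute with `M Mᴴ`. -/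
theorem commute_mul_conjTranspose_of_congruence {n : Type*} [Fintype n] [DecidableEq n]
    {W M : Matrix n n ℂ} (hW : W ∈ unitaryGroup n ℂ) (h : W * M * Wᵀ = M) :
    Commute W (M * Mᴴ) := by
  have hWW : Wᴴ * W = 1 := mem_unitaryGroup_iff'.mp hW
  have hT : Wᵀ * Wᵀᴴ = 1 := by
    rw [show Wᵀᴴ = Wᴴᵀ from rfl, ← transpose_mul, hWW, transpose_one]
  have key : M * Mᴴ = W * (M * Mᴴ) * Wᴴ := by
    calc M * Mᴴ = (W * M * Wᵀ) * (W * M * Wᵀ)ᴴ := by rw [h]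
      _ = W * M * (Wᵀ * Wᵀᴴ) * (Mᴴ * Wᴴ) := by
        simp only [conjTranspose_mul, Matrix.mul_assoc]
      _ = W * (M * Mᴴ) * Wᴴ := by rw [hT]; simp only [Matrix.mul_one, Matrix.mul_assoc]
  calc W * (M * Mᴴ) = W * (M * Mᴴ) * (Wᴴ * W) := by rw [hWW, Matrix.mul_one]
    _ = W * (M * Mᴴ) * Wᴴ * W := by rw [Matrix.mul_assoc _ Wᴴ W]
    _ = M * Mᴴ * W := by rw [← key]

/-- A matrix commuting with a diagonal matrix vanishes off its level blocks. -/
theorem apply_eq_zero_of_commute_diagonal {n : Type*} [Fintype n] [DecidableEq n]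
    {W : Matrix n n ℂ} {d : n → ℂ} (h : Commute W (diagonal d)) {x y : n} (hxy : d x ≠ d y) :
    W x y = 0 := by
  have e := congrFun (congrFun h.eq x) y
  rw [mul_diagonal, diagonal_mul, mul_comm] at e
  exact (mul_eq_mul_right_iff.mp e).resolve_left (Ne.symm hxy)

/-- Congruence of `M` by a block diagonal matrix acts block by block. -/
theorem fromBlocks_blockDiagonal'_congruence_bigM (ℓ m : ℕ) (μ : Fin ℓ → ℕ) (Λ : Fin ℓ → ℝ)
    (Wb : ∀ i : Fin ℓ, Matrix (Fin (2 * μ i)) (Fin (2 * μ i)) ℂ)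
    (D : Matrix (Fin m) (Fin m) ℂ) :
    fromBlocks (blockDiagonal' Wb) 0 0 D * bigM ℓ m μ Λ *
        (fromBlocks (blockDiagonal' Wb) 0 0 D)ᵀ =
      fromBlocks (blockDiagonal' fun i => (Λ i : ℂ) • (Wb i * OmegaMat (μ i) * (Wb i)ᵀ))
        0 0 0 := by
  rw [bigM, fromBlocks_transpose, fromBlocks_multiply, fromBlocks_multiply,
    blockDiagonal'_transpose]
  simp only [transpose_zero, Matrix.mul_zero, Matrix.zero_mul, add_zero]
  rw [← blockDiagonal'_mul, ← blockDiagonal'_mul]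
  simp only [Matrix.mul_smul, Matrix.smul_mul]

/-- A unitary block diagonal matrix has unitary blocks. -/
theorem unitary_blocks_of_fromBlocks_blockDiagonal' {ι m : Type*} {n : ι → Type*}
    [Fintype ι] [DecidableEq ι] [∀ i, Fintype (n i)] [∀ i, DecidableEq (n i)]
    [Fintype m] [DecidableEq m] {Wb : ∀ i, Matrix (n i) (n i) ℂ} {D : Matrix m m ℂ}
    (h : fromBlocks (blockDiagonal' Wb) 0 0 D ∈ unitaryGroup ((Σ i, n i) ⊕ m) ℂ) :
    (∀ i, Wb i ∈ unitaryGroup (n i) ℂ) ∧ D ∈ unitaryGroup m ℂ := by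
  rw [mem_unitaryGroup_iff, star_eq_conjTranspose, fromBlocks_conjTranspose,
    fromBlocks_multiply, blockDiagonal'_conjTranspose, ← fromBlocks_one, fromBlocks_inj] at h
  obtain ⟨h₁, -, -, h₂⟩ := h
  simp only [conjTranspose_zero, Matrix.mul_zero, add_zero, zero_add] at h₁ h₂
  rw [← blockDiagonal'_mul, ← blockDiagonal'_one] at h₁
  exact ⟨fun i => mem_unitaryGroup_iff.mpr (congrFun (blockDiagonal'_injective h₁) i),
    mem_unitaryGroup_iff.mpr h₂⟩

/-- **Symmetries of the decomposition `ζ = U M Uᵀ`.** Let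
`M = ⊕_i Λ_i Ω_{μ_i} ⊕ 0` with `Λ_1 > … > Λ_ℓ > 0` distinct and `μ_i ≥ 1`. A unitary
`W` satisfies `W M Wᵀ = M` iff `W = diag(W_1, …, W_ℓ, D)` with each `W_i` unitary
satisfying `W_i Ω_{μ_i} W_iᵀ = Ω_{μ_i}` (i.e. `W_i ∈ Sp(2μ_i) = Sp(2μ_i,ℂ) ∩ U(2μ_i)`)
and `D ∈ U(N − 2k)`. -/
theorem symmetries_of_decomposition (ℓ m : ℕ) (μ : Fin ℓ → ℕ) (hμ : ∀ i, 0 < μ i)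
    (Λ : Fin ℓ → ℝ) (hΛpos : ∀ i, 0 < Λ i) (hΛanti : StrictAnti Λ)
    (W : Matrix ((Σ i : Fin ℓ, Fin (2 * μ i)) ⊕ Fin m)
      ((Σ i : Fin ℓ, Fin (2 * μ i)) ⊕ Fin m) ℂ)
    (hW : W ∈ Matrix.unitaryGroup ((Σ i : Fin ℓ, Fin (2 * μ i)) ⊕ Fin m) ℂ) :
    W * bigM ℓ m μ Λ * Wᵀ = bigM ℓ m μ Λ ↔
      ∃ (Wb : ∀ i : Fin ℓ, Matrix (Fin (2 * μ i)) (Fin (2 * μ i)) ℂ)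
        (D : Matrix (Fin m) (Fin m) ℂ),
        (∀ i, Wb i ∈ Matrix.unitaryGroup (Fin (2 * μ i)) ℂ ∧
          Wb i * OmegaMat (μ i) * (Wb i)ᵀ = OmegaMat (μ i)) ∧
        D ∈ Matrix.unitaryGroup (Fin m) ℂ ∧
        W = Matrix.fromBlocks (Matrix.blockDiagonal' Wb) 0 0 D := by
  constructor
  · intro h
    have hcomm := commute_mul_conjTranspose_of_congruence hW h
    rw [bigM_mul_conjTranspose] at hcomm
    have hpos : ∀ i, (Λ i : ℂ) ^ 2 ≠ 0 := fun i =>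
      pow_ne_zero 2 (Complex.ofReal_ne_zero.mpr (hΛpos i).ne')
    have hinj : ∀ i j, i ≠ j → (Λ i : ℂ) ^ 2 ≠ (Λ j : ℂ) ^ 2 := by
      intro i j hij e
      have e' : Λ i ^ 2 = Λ j ^ 2 := by exact_mod_cast e
      exact hij (hΛanti.injective ((sq_eq_sq₀ (hΛpos i).le (hΛpos j).le).mp e'))
    have hblocks : W = fromBlocks
        (blockDiagonal' fun i => of fun a b => W (Sum.inl ⟨i, a⟩) (Sum.inl ⟨i, b⟩))
        0 0 W.toBlocks₂₂ := by
      ext x y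
      rcases x with ⟨i, a⟩ | a <;> rcases y with ⟨j, b⟩ | b
      · by_cases hij : i = j
        · subst hij
          simp
        · rw [fromBlocks_apply₁₁, blockDiagonal'_apply_ne _ _ _ hij]
          exact apply_eq_zero_of_commute_diagonal hcomm (hinj i j hij)
      · exact apply_eq_zero_of_commute_diagonal hcomm (hpos i)
      · exact apply_eq_zero_of_commute_diagonal hcomm (hpos j).symm
      · rfl
    have hunit := unitary_blocks_of_fromBlocks_blockDiagonal' (hblocks ▸ hW)
    refine ⟨_, _, fun i => ⟨hunit.1 i, ?_⟩, hunit.2, hblocks⟩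
    rw [hblocks, fromBlocks_blockDiagonal'_congruence_bigM, bigM, fromBlocks_inj] at h
    exact smul_right_injective _ (Complex.ofReal_ne_zero.mpr (hΛpos i).ne')
      (congrFun (blockDiagonal'_injective h.1) i)
  · rintro ⟨Wb, D, hWb, -, rfl⟩
    rw [fromBlocks_blockDiagonal'_congruence_bigM, bigM]
    simp only [(hWb _).2]
end

section
/- No-go for coarse-graining: let k ≥ 2 and for α = 1, …, k and a = 1, …, N let |z^α_a⟩ ∈ ℂ² be spinors satisfying the closure constraints Σ_{a=1}^{N} |z^α_a⟩⟨z^β_a| = δ_{αβ} Λ_α 1₂ with Λ_α > 0 (so that Σ_{a=1}^{N} ⟨z^α_a|z^α_a⟩ = 2Λ_α). Define e_{ab} := Σ_{α=1}^{k} ⟨z^α_a|z^α_b⟩. Then Σ_{a,b=1}^{N} ( (1/2) e_{ab} e_{ba} − (1/4) e_{aa} e_{bb} ) = − Σ_{α ≠ β} Λ_α Λ_β < 0; consequently the coarse-grained normal vectors (whose pairwise scalar products are V_a·V_b = (1/2)e_{ab}e_{ba} − (1/4)e_{aa}e_{bb}) do not satisfy the closure condition Σ_a V_a = 0, i.e.,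 the diagonal so*(2N) observables are not the observables of a single closed polyhedron. -/
open Matrix

/-- The matrix `Z` whose row `(α, i)` collects the `i`-th components of the vectors `z α a`. -/
def stackedMatrix {κ ν ι : Type*} (z : κ → ν → ι → ℂ) : Matrix (κ × ι) ν ℂ :=
  Matrix.of fun p a => z p.1 a p.2

/-- The entries of `Zᴴ Z` are the sums of scalar products `Σ_α ⟨z^α_a|z^α_b⟩`. -/
theorem conjTranspose_stackedMatrix_mul_apply {κ ν ι : Type*} [Fintype κ]
    [Fintype ι] (z : κ → ν → ι → ℂ) (a b : ν) :
    ((stackedMatrix z)ᴴ * stackedMatrix z) a b = ∑ α, star (z α a) ⬝ᵥ z α b := by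
  simp [stackedMatrix, Matrix.mul_apply, dotProduct, Fintype.sum_prod_type]

/-- The closure constraints say that `Z Zᴴ` is diagonal. -/
theorem stackedMatrix_mul_conjTranspose_of_closure {κ ν ι : Type*} [Fintype ν]
    [DecidableEq κ] [DecidableEq ι]
    (z : κ → ν → ι → ℂ) (Λ : κ → ℂ)
    (hclosure : ∀ α β, ∑ a, Matrix.vecMulVec (z α a) (star (z β a)) =
      (if α = β then Λ α else 0) • (1 : Matrix ι ι ℂ)) :
    stackedMatrix z * (stackedMatrix z)ᴴ = Matrix.diagonal fun p : κ × ι => Λ p.1 := by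
  ext ⟨α, i⟩ ⟨β, j⟩
  have h := congrFun (congrFun (hclosure α β) i) j
  simp only [Matrix.sum_apply, Matrix.vecMulVec_apply, Pi.star_apply, Matrix.smul_apply,
    Matrix.one_apply, smul_eq_mul] at h
  simp only [stackedMatrix, Matrix.mul_apply, Matrix.conjTranspose_apply, Matrix.of_apply,
    Matrix.diagonal_apply, Prod.mk.injEq, h]
  split_ifs <;> simp_all

/-- `tr (e²)` for `e = Zᴴ Z` under the closure constraints. -/
theorem sum_mul_swap_of_closure {κ ν ι : Type*} [Fintype κ] [Fintype ν] [Fintype ι]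
    [DecidableEq κ] [DecidableEq ι]
    (z : κ → ν → ι → ℂ) (Λ : κ → ℂ)
    (hclosure : ∀ α β, ∑ a, Matrix.vecMulVec (z α a) (star (z β a)) =
      (if α = β then Λ α else 0) • (1 : Matrix ι ι ℂ)) :
    ∑ a, ∑ b, (∑ α, star (z α a) ⬝ᵥ z α b) * (∑ α, star (z α b) ⬝ᵥ z α a) =
      Fintype.card ι * ∑ α, Λ α ^ 2 := by
  set Z := stackedMatrix z with hZ
  calc _ = ((Zᴴ * Z) * (Zᴴ * Z)).trace := by
        refine Finset.sum_congr rfl fun a _ => ?_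
        rw [Matrix.diag_apply, Matrix.mul_apply]
        simp only [hZ, conjTranspose_stackedMatrix_mul_apply]
    _ = ((Z * Zᴴ) * (Z * Zᴴ)).trace := by
        rw [Matrix.mul_assoc, Matrix.trace_mul_comm]
        simp only [Matrix.mul_assoc]
    _ = _ := by
        rw [stackedMatrix_mul_conjTranspose_of_closure z Λ hclosure, Matrix.diagonal_mul_diagonal,
          Matrix.trace_diagonal, Fintype.sum_prod_type, Finset.mul_sum]
        simp [sq]

/-- `tr e` for `e = Zᴴ Z` under the closure constraints. -/
theorem sum_self_of_closure {κ ν ι : Type*} [Fintype κ] [Fintype ν] [Fintype ι]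
    [DecidableEq κ] [DecidableEq ι]
    (z : κ → ν → ι → ℂ) (Λ : κ → ℂ)
    (hclosure : ∀ α β, ∑ a, Matrix.vecMulVec (z α a) (star (z β a)) =
      (if α = β then Λ α else 0) • (1 : Matrix ι ι ℂ)) :
    ∑ a, ∑ α, star (z α a) ⬝ᵥ z α a = Fintype.card ι * ∑ α, Λ α := by
  set Z := stackedMatrix z with hZ
  calc _ = (Zᴴ * Z).trace := by
        simp only [Matrix.trace, Matrix.diag_apply, hZ, conjTranspose_stackedMatrix_mul_apply]
    _ = _ := by
        rw [Matrix.trace_mul_comm, stackedMatrix_mul_conjTranspose_of_closure z Λ hclosure,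
          Matrix.trace_diagonal, Fintype.sum_prod_type, Finset.mul_sum]
        simp

theorem sum_offDiag_mul {κ R : Type*} [Fintype κ] [DecidableEq κ] [CommRing R] (f : κ → R) :
    ∑ α, ∑ β, (if α ≠ β then f α * f β else 0) = (∑ α, f α) ^ 2 - ∑ α, f α ^ 2 := by
  have h (α β : κ) : (if α ≠ β then f α * f β else 0) =
      f α * f β - if α = β then f α * f β else 0 := by
    split_ifs <;> simp_all
  simp only [h, Finset.sum_sub_distrib, Finset.sum_ite_eq, Finset.mem_univ, if_true,
    sq, Finset.sum_mul_sum]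

theorem sum_offDiag_mul_pos {κ : Type*} [Fintype κ] [DecidableEq κ] [Nontrivial κ]
    (f : κ → ℝ) (hf : ∀ α, 0 < f α) :
    0 < ∑ α, ∑ β, (if α ≠ β then f α * f β else 0) := by
  have hnonneg (α β : κ) : 0 ≤ if α ≠ β then f α * f β else 0 := by
    split_ifs
    · exact (mul_pos (hf α) (hf β)).le
    · exact le_rfl
  refine Finset.sum_pos (fun α _ => ?_) Finset.univ_nonempty
  obtain ⟨β, hβ⟩ := exists_ne α
  refine Finset.sum_pos' (fun β _ => hnonneg α β) ⟨β, Finset.mem_univ β, ?_⟩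
  rw [if_pos hβ.symm]
  exact mul_pos (hf α) (hf β)

/-- **No-go for coarse-graining.** Let `k ≥ 2` and let spinors `|z^α_a⟩ ∈ ℂ²`
(`α = 1,…,k`, `a = 1,…,N`) satisfy the closure constraints
`Σ_a |z^α_a⟩⟨z^β_a| = δ_{αβ} Λ_α 1₂` with `Λ_α > 0`. With
`e_{ab} = Σ_α ⟨z^α_a|z^α_b⟩`, one has
`Σ_{a,b} (½ e_{ab} e_{ba} − ¼ e_{aa} e_{bb}) = −Σ_{α≠β} Λ_α Λ_β < 0`; in particular it
is nonzero, so the coarse-grained normals do not satisfy the closure condition of a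
single closed polyhedron. -/
theorem no_go_coarse_graining (N k : ℕ) (hk : 2 ≤ k)
    (z : Fin k → Fin N → Fin 2 → ℂ) (Λ : Fin k → ℝ) (hΛ : ∀ α, 0 < Λ α)
    (hclosure : ∀ α β : Fin k,
      (∑ a : Fin N, Matrix.vecMulVec (z α a) (star (z β a))) =
        (if α = β then ((Λ α : ℝ) : ℂ) else 0) • (1 : Matrix (Fin 2) (Fin 2) ℂ)) :
    (∑ a : Fin N, ∑ b : Fin N,
        ((1 / 2 : ℂ) * ((∑ α : Fin k, star (z α a) ⬝ᵥ z α b) *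
            (∑ α : Fin k, star (z α b) ⬝ᵥ z α a)) -
          (1 / 4 : ℂ) * ((∑ α : Fin k, star (z α a) ⬝ᵥ z α a) *
            (∑ α : Fin k, star (z α b) ⬝ᵥ z α b)))) =
      -(((∑ α : Fin k, ∑ β : Fin k, if α ≠ β then Λ α * Λ β else 0 : ℝ)) : ℂ) ∧
    (0 : ℝ) < ∑ α : Fin k, ∑ β : Fin k, (if α ≠ β then Λ α * Λ β else 0) ∧
    (∑ a : Fin N, ∑ b : Fin N,
        ((1 / 2 : ℂ) * ((∑ α : Fin k, star (z α a) ⬝ᵥ z α b) *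
            (∑ α : Fin k, star (z α b) ⬝ᵥ z α a)) -
          (1 / 4 : ℂ) * ((∑ α : Fin k, star (z α a) ⬝ᵥ z α a) *
            (∑ α : Fin k, star (z α b) ⬝ᵥ z α b)))) ≠ 0 := by
  have : Nontrivial (Fin k) := Fin.nontrivial_iff_two_le.mpr hk
  have hpos := sum_offDiag_mul_pos Λ hΛ
  have hsum : (∑ a : Fin N, ∑ b : Fin N,
        ((1 / 2 : ℂ) * ((∑ α : Fin k, star (z α a) ⬝ᵥ z α b) *
            (∑ α : Fin k, star (z α b) ⬝ᵥ z α a)) -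
          (1 / 4 : ℂ) * ((∑ α : Fin k, star (z α a) ⬝ᵥ z α a) *
            (∑ α : Fin k, star (z α b) ⬝ᵥ z α b)))) =
      -(((∑ α : Fin k, ∑ β : Fin k, if α ≠ β then Λ α * Λ β else 0 : ℝ)) : ℂ) := by
    simp only [Finset.sum_sub_distrib, ← Finset.mul_sum]
    rw [← Finset.sum_mul, sum_self_of_closure z (fun α => (Λ α : ℂ)) hclosure,
      sum_mul_swap_of_closure z (fun α => (Λ α : ℂ)) hclosure, sum_offDiag_mul]
    push_cast [Fintype.card_fin]
    ring
  refine ⟨hsum, hpos, ?_⟩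
  rw [hsum, neg_ne_zero]
  exact Complex.ofReal_ne_zero.mpr hpos.ne'
end
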